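/- The integral R_C(1, 2) = ∫_0^∞ x·cos(2πx)/(exp(2π√x) − 1) dx converges and equals (1/64)·(1/2 − 3/π + 5/π²). -/

import Mathlib

open MeasureTheory Real Set

open Filter Topology in
lemma rc_int {g : ℝ → ℂ} {C : ℝ} (hc : ContinuousOn g (Ici 0))
    (hb : ∀ᶠ R : ℝ in atTop, ‖g R‖ ≤ C * Real.exp (-R)) : IntegrableOn g (Ioi 0) := by
  have ho : g =O[atTop] fun x => Real.exp (-1 * x) := by
    refine Asymptotics.IsBigO.of_bound C ?_
    filter_upwards [hb] with R hR
    simpa using hR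
  exact integrableOn_Ici_iff_integrableOn_Ioi (by finiteness) |>.mp <|
    (hc.locallyIntegrableOn measurableSet_Ici).integrableOn_of_isBigO_atTop
    ho ⟨Ioi 1, Ioi_mem_atTop 1, exp_neg_integrableOn_Ioi 1 one_pos⟩

open Filter Topology in
lemma rc_shift {f : ℂ → ℂ} {C Y : ℝ} (hY : 0 < Y)
    (hc : ContinuousOn f {z | 0 ≤ z.re ∧ 0 ≤ z.im ∧ z.im ≤ Y})
    (hd : DifferentiableOn ℂ f {z | 0 < z.re ∧ 0 < z.im ∧ z.im < Y})
    (hb : ∀ᶠ R : ℝ in atTop, ∀ y : ℝ, 0 ≤ y → y ≤ Y →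
      ‖f (R + y * Complex.I)‖ ≤ C * Real.exp (-R)) :
    IntegrableOn (fun t : ℝ => f t) (Ioi 0) ∧
    IntegrableOn (fun t : ℝ => f (t + Y * Complex.I)) (Ioi 0) ∧
    (∫ t in Ioi (0:ℝ), f t) - (∫ t in Ioi (0:ℝ), f (t + Y * Complex.I))
      = Complex.I * ∫ y in (0:ℝ)..Y, f (y * Complex.I) := by
  have i1 : IntegrableOn (fun t : ℝ => f t) (Ioi 0) := by
    refine rc_int (C := C) ?_ ?_
    · refine hc.comp (by fun_prop) ?_
      intro t ht
      simp only [mem_ofPred_eq, Complex.ofReal_re, Complex.ofReal_im]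
      exact ⟨ht, le_rfl, hY.le⟩
    · filter_upwards [hb] with R hR
      simpa using hR 0 le_rfl hY.le
  have i2 : IntegrableOn (fun t : ℝ => f (t + Y * Complex.I)) (Ioi 0) := by
    refine rc_int (C := C) ?_ ?_
    · refine hc.comp (by fun_prop) ?_
      intro t ht
      simp only [mem_ofPred_eq]
      simp
      exact ⟨ht, hY.le⟩
    · filter_upwards [hb] with R hR
      simpa using hR Y hY.le le_rfl
  refine ⟨i1, i2, ?_⟩
  have t1 := intervalIntegral_tendsto_integral_Ioi 0 i1 tendsto_id
  have t2 := intervalIntegral_tendsto_integral_Ioi 0 i2 tendsto_id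
  have t3 : Tendsto (fun R : ℝ => ∫ y in (0:ℝ)..Y, f (R + y * Complex.I)) atTop (𝓝 0) := by
    have : Tendsto (fun R : ℝ => C * Real.exp (-R) * |Y - 0|) atTop (𝓝 0) := by
      have := (Real.tendsto_exp_neg_atTop_nhds_zero.const_mul C).mul_const |Y - 0|
      simpa using this
    refine squeeze_zero_norm' ?_ this
    filter_upwards [hb] with R hR
    refine intervalIntegral.norm_integral_le_of_norm_le_const ?_
    intro y hy
    rw [uIoc_of_le hY.le] at hy
    exact hR y hy.1.le hy.2
  have key := ((t1.sub t2).add (t3.const_mul Complex.I)).sub_const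
    (Complex.I * ∫ y in (0:ℝ)..Y, f (y * Complex.I))
  have z : Tendsto (fun _ : ℝ => (0:ℂ)) atTop (𝓝 0) := tendsto_const_nhds
  have e := tendsto_nhds_unique (key.congr' ?_) z
  · linear_combination e
  · filter_upwards [eventually_gt_atTop 0] with R hR
    have := Complex.integral_boundary_rect_eq_zero_of_continuousOn_of_differentiableOn f 0
      (R + Y * Complex.I) (hc.mono ?_) (hd.mono ?_)
    · simpa using this
    · intro w hw
      simp [Complex.mem_reProdIm, uIcc_of_le hR.le, uIcc_of_le hY.le] at hw
      simp; tauto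
    · intro w hw
      simp [Complex.mem_reProdIm, hR.le, hY.le] at hw
      simp; tauto

open Filter Topology in
lemma rc_ftc {A F E : ℂ → ℂ} {c : ℂ} {C a b : ℝ} (hF : Continuous F) (hE : Continuous E)
    (hA : ∀ z, HasDerivAt A (F z - c * E z) z)
    (bA : ∀ᶠ R : ℝ in atTop, ‖A (R + b * Complex.I)‖ ≤ C * Real.exp (-R))
    (iF : IntegrableOn (fun t : ℝ => F (t + b * Complex.I)) (Ioi 0))
    (iE : IntegrableOn (fun t : ℝ => E (t + b * Complex.I)) (Ioi 0)) :
    (Complex.I * ∫ y in a..b, F (y * Complex.I)) + (∫ t in Ioi (0:ℝ), F (t + b * Complex.I))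
     = - A (a * Complex.I) + c * ((Complex.I * ∫ y in a..b, E (y * Complex.I)) +
        (∫ t in Ioi (0:ℝ), E (t + b * Complex.I))) := by
  have h1 : ∫ t in Ioi (0:ℝ), (F (t + b * Complex.I) - c * E (t + b * Complex.I))
      = 0 - A ((0:ℝ) + b * Complex.I) := by
    refine integral_Ioi_of_hasDerivAt_of_tendsto' (f := fun t : ℝ => A (t + b * Complex.I)) ?_
      (iF.sub (iE.const_mul c)) ?_
    · intro x _
      have : HasDerivAt (fun t : ℝ => (t:ℂ) + b * Complex.I) 1 x :=
        (HasDerivAt.ofReal_comp (hasDerivAt_id x)).add_const _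
      have h := (hA (x + b * Complex.I)).comp x this
      rw [mul_one] at h
      exact h
    · refine squeeze_zero_norm' bA ?_
      simpa using Real.tendsto_exp_neg_atTop_nhds_zero.const_mul C
  have h2 : ∫ y in a..b, Complex.I * (F (y * Complex.I) - c * E (y * Complex.I))
      = A (b * Complex.I) - A (a * Complex.I) := by
    refine intervalIntegral.integral_eq_sub_of_hasDerivAt (f := fun y : ℝ => A (y * Complex.I)) ?_ ?_
    · intro x _
      have : HasDerivAt (fun t : ℝ => (t:ℂ) * Complex.I) (1 * Complex.I) x :=
        (HasDerivAt.ofReal_comp (hasDerivAt_id x)).mul_const _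
      have := (hA (x * Complex.I)).comp x this
      rw [one_mul, mul_comm] at this
      exact this
    · exact Continuous.intervalIntegrable (by fun_prop) _ _
  rw [integral_sub iF (iE.const_mul c), integral_const_mul] at h1
  rw [intervalIntegral.integral_const_mul, intervalIntegral.integral_sub,
    intervalIntegral.integral_const_mul] at h2
  · simp only [Complex.ofReal_zero, zero_add] at h1
    linear_combination h1 + h2
  · exact Continuous.intervalIntegrable (by fun_prop) _ _
  · exact Continuous.intervalIntegrable (by fun_prop) _ _

lemma rc_normE (b x y : ℝ) : ‖Complex.exp (-((b:ℂ) - 2 * π * Complex.I) * (x + y * Complex.I) ^ 2)‖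
    = Real.exp (- b * (x^2 - y^2) - 4 * π * x * y) := by
  rw [Complex.norm_exp]
  congr 1
  simp [pow_two]
  ring

open Filter Topology in
lemma rc_M0 {Y : ℝ} (hY : 0 < Y) :
    (Complex.I * ∫ y in (0:ℝ)..Y, Complex.exp (2 * π * Complex.I * (y * Complex.I) ^ 2)) +
     (∫ t in Ioi (0:ℝ), Complex.exp (2 * π * Complex.I * (t + Y * Complex.I) ^ 2))
     = (1 + Complex.I) / 4 := by
  have hpi := Real.pi_pos
  have main : ∀ b : ℝ, 0 < b →
      (Complex.I * ∫ y in (0:ℝ)..Y, Complex.exp (-((b:ℂ) - 2 * π * Complex.I) * (y * Complex.I) ^ 2)) +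
     (∫ t in Ioi (0:ℝ), Complex.exp (-((b:ℂ) - 2 * π * Complex.I) * (t + Y * Complex.I) ^ 2))
      = (π / ((b:ℂ) - 2 * π * Complex.I)) ^ (1 / 2 : ℂ) / 2 := by
    intro b hb
    rw [← integral_gaussian_complex_Ioi (b := (b:ℂ) - 2 * π * Complex.I) (by simpa using hb)]
    have := rc_shift (C := Real.exp (b * Y^2)) (f := fun z => Complex.exp (-((b:ℂ) - 2 * π * Complex.I) * z ^ 2)) hY
      (Continuous.continuousOn (by fun_prop)) (Differentiable.differentiableOn (by fun_prop)) ?_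
    · linear_combination -this.2.2
    · filter_upwards [eventually_gt_atTop (1/b), eventually_gt_atTop 0] with R hR hR0 y hy0 hyY
      rw [rc_normE, ← Real.exp_add]
      apply Real.exp_le_exp.mpr
      have h1 : R ≤ b * R^2 := by
        have : 1 < R * b := by rwa [div_lt_iff₀ hb] at hR
        nlinarith
      have h2 : b * y^2 ≤ b * Y^2 := by gcongr
      have : 0 ≤ 4 * π * R * y := by positivity
      linarith
  have l1 : Tendsto (fun b : ℝ => (π / ((b:ℂ) - 2 * π * Complex.I)) ^ (1 / 2 : ℂ) / 2) (𝓝[>] 0)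
      (𝓝 ((π / ((0:ℝ) - 2 * π * Complex.I)) ^ (1 / 2 : ℂ) / 2)) := by
    have hne : ((0:ℝ):ℂ) - 2 * π * Complex.I ≠ 0 := by
      simp [Real.pi_ne_zero]
    have : ContinuousAt (fun b : ℝ => (π / ((b:ℂ) - 2 * π * Complex.I)) ^ (1 / 2 : ℂ) / 2) 0 := by
      refine ContinuousAt.div_const (ContinuousAt.cpow ?_ continuousAt_const ?_) _
      · exact ContinuousAt.div continuousAt_const (by fun_prop) hne
      · right
        have : (π / (((0:ℝ):ℂ) - 2 * π * Complex.I)) = ((1/2 : ℝ):ℂ) * Complex.I := by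
          rw [div_eq_iff hne]
          push_cast
          ring_nf
          simp
        rw [this]
        simp
    exact this.tendsto.mono_left nhdsWithin_le_nhds
  have l2 : Tendsto (fun b : ℝ => ∫ y in (0:ℝ)..Y, Complex.exp (-((b:ℂ) - 2 * π * Complex.I) * (y * Complex.I) ^ 2))
      (𝓝[>] 0) (𝓝 (∫ y in (0:ℝ)..Y, Complex.exp (2 * π * Complex.I * (y * Complex.I) ^ 2))) := by
    have := intervalIntegral.continuous_parametric_intervalIntegral_of_continuous' (μ := volume)
      (f := fun (b:ℝ) (y:ℝ) => Complex.exp (-((b:ℂ) - 2 * π * Complex.I) * (y * Complex.I) ^ 2))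
      (by simp only [Function.uncurry_def]; fun_prop) 0 Y
    have := (this.tendsto 0).mono_left (nhdsWithin_le_nhds (s := Ioi 0))
    simpa using this
  have l3 : Tendsto (fun b : ℝ => ∫ t in Ioi (0:ℝ), Complex.exp (-((b:ℂ) - 2 * π * Complex.I) * (t + Y * Complex.I) ^ 2))
      (𝓝[>] 0) (𝓝 (∫ t in Ioi (0:ℝ), Complex.exp (2 * π * Complex.I * (t + Y * Complex.I) ^ 2))) := by
    refine tendsto_integral_filter_of_dominated_convergence
      (fun t => Real.exp (Y^2) * Real.exp (-(4 * π * Y) * t)) ?_ ?_ ?_ ?_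
    · refine Eventually.of_forall fun b => ?_
      exact Continuous.aestronglyMeasurable (by fun_prop)
    · have : Ioo (0:ℝ) 1 ∈ 𝓝[>] (0:ℝ) := Ioo_mem_nhdsGT one_pos
      filter_upwards [this] with b hb
      refine Eventually.of_forall fun t => ?_
      rw [rc_normE, ← Real.exp_add]
      apply Real.exp_le_exp.mpr
      have := hb.1
      have := hb.2
      nlinarith [mul_nonneg hb.1.le (sq_nonneg t), sq_nonneg Y]
    · exact (exp_neg_integrableOn_Ioi 0 (by positivity)).const_mul _
    · refine Eventually.of_forall fun t => ?_
      have : Continuous (fun b : ℝ => Complex.exp (-((b:ℂ) - 2 * π * Complex.I) * (t + Y * Complex.I) ^ 2)) := by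
        fun_prop
      have := (this.tendsto 0).mono_left (nhdsWithin_le_nhds (s := Ioi 0))
      simpa using this
  have l4 := ((l2.const_mul Complex.I).add l3).congr' (f₂ := fun b : ℝ => (π / ((b:ℂ) - 2 * π * Complex.I)) ^ (1 / 2 : ℂ) / 2)
    (by filter_upwards [self_mem_nhdsWithin] with b hb using main b hb)
  rw [tendsto_nhds_unique l4 l1]
  have hne : ((0:ℝ):ℂ) - 2 * π * Complex.I ≠ 0 := by
    simp [Real.pi_ne_zero]
  have e1 : (π / (((0:ℝ):ℂ) - 2 * π * Complex.I)) = ((1 + Complex.I) / 2) ^ 2 := by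
    rw [div_eq_iff hne]
    push_cast
    linear_combination (2 * π * ( Complex.I / 4 + 1/2) : ℂ) * Complex.I_sq
  rw [e1, one_div, Complex.sq_cpow_two_inv]
  · ring
  · simp

noncomputable def rcG (z : ℂ) : ℂ := Complex.exp (2 * π * Complex.I * z ^ 2)
noncomputable def rcP (z : ℂ) : ℂ := z ^ 2 * (z - Complex.I) ^ 2
noncomputable def rcU (z : ℂ) : ℂ := Complex.exp (2 * π * z)

lemma rcG_norm (x y : ℝ) : ‖rcG (x + y * Complex.I)‖ = Real.exp (- 4 * π * x * y) := by
  have := rc_normE 0 x y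
  simp only [Complex.ofReal_zero, zero_sub, neg_neg, neg_zero, zero_mul] at this
  rw [rcG, this]; congr 1; ring

lemma rcU_norm (x y : ℝ) : ‖rcU (x + y * Complex.I)‖ = Real.exp (2 * π * x) := by
  rw [rcU, Complex.norm_exp]; congr 1; simp

@[fun_prop] lemma rcG_diff : Differentiable ℂ rcG := by unfold rcG; fun_prop
@[fun_prop] lemma rcP_diff : Differentiable ℂ rcP := by unfold rcP; fun_prop
@[fun_prop] lemma rcU_diff : Differentiable ℂ rcU := by unfold rcU; fun_prop
@[fun_prop] lemma rcG_cont : Continuous rcG := rcG_diff.continuous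
@[fun_prop] lemma rcP_cont : Continuous rcP := rcP_diff.continuous
@[fun_prop] lemma rcU_cont : Continuous rcU := rcU_diff.continuous

lemma rcG_deriv (z : ℂ) : HasDerivAt rcG (4 * π * Complex.I * z * rcG z) z := by
  have := (((hasDerivAt_id z).pow 2).const_mul (2 * π * Complex.I : ℂ)).cexp
  refine this.congr_deriv ?_
  simp [rcG]; ring

lemma rcU_deriv (z : ℂ) : HasDerivAt rcU (2 * π * rcU z) z := by
  have := ((hasDerivAt_id z).const_mul (2 * π : ℂ)).cexp
  refine this.congr_deriv ?_
  simp [rcU]; ring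

lemma rcU_I (z : ℂ) : rcU (z + Complex.I) = rcU z := by
  rw [rcU, mul_add, Complex.exp_add, Complex.exp_two_pi_mul_I, mul_one, rcU]

lemma rcG_I (z : ℂ) : rcG (z + Complex.I) * rcU z ^ 2 = rcG z := by
  rw [rcG, rcU, rcG, ← Complex.exp_nat_mul, ← Complex.exp_add]
  rw [Complex.exp_eq_exp_iff_exists_int]
  refine ⟨-1, ?_⟩
  push_cast
  linear_combination (2 * π * (2 * z + Complex.I)) * Complex.I_sq

lemma rcG_half (z : ℂ) : rcG (z + Complex.I / 2) * rcU (z + Complex.I / 2) = Complex.I * rcG z := by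
  rw [rcG, rcU, rcG, ← Complex.exp_add]
  have : Complex.I = Complex.exp (π / 2 * Complex.I) := by rw [Complex.exp_pi_div_two_mul_I]
  conv_rhs => rw [this]
  rw [← Complex.exp_add]
  congr 1
  rw [← this]
  linear_combination (2 * π * z + π * Complex.I/2) * Complex.I_sq

lemma rcU_eq_one {z : ℂ} (h : rcU z = 1) : ∃ n : ℤ, z = n * Complex.I := by
  rw [rcU, Complex.exp_eq_one_iff] at h
  obtain ⟨n, hn⟩ := h
  refine ⟨n, ?_⟩
  have : (2 * π : ℂ) ≠ 0 := by simp [Real.pi_ne_zero]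
  apply mul_left_cancel₀ this
  rw [hn]; ring

lemma rcU_strip {z : ℂ} (h : rcU z = 1) (h0 : 0 ≤ z.im) (h1 : z.im ≤ 1) : z = 0 ∨ z = Complex.I := by
  obtain ⟨n, rfl⟩ := rcU_eq_one h
  simp at h0 h1
  have h1' : n ≤ 1 := by exact_mod_cast h1
  have : n = 0 ∨ n = 1 := by omega
  rcases this with rfl | rfl <;> simp

lemma rc_poly {R y : ℝ} (hR : 0 ≤ R) (h0 : 0 ≤ y) (h1 : y ≤ 1) :
    (‖(R + y * Complex.I : ℂ)‖ + 1) ^ 4 ≤ 24 * Real.exp 2 * Real.exp R := by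
  have a : ‖(R + y * Complex.I : ℂ)‖ ≤ R + 1 := by
    refine (norm_add_le _ _).trans ?_
    simp [abs_of_nonneg hR, abs_of_nonneg h0, h1]
  have := Real.pow_div_factorial_le_exp (x := R + 2) (by linarith) 4
  have e : ((Nat.factorial 4 : ℕ) : ℝ) = 24 := by norm_num [Nat.factorial]
  rw [e, div_le_iff₀ (by norm_num), add_comm, Real.exp_add] at this
  calc _ ≤ (2 + R) ^ 4 := pow_le_pow_left₀ (by positivity) (by linarith) 4
    _ ≤ _ := by linarith

lemma rcP_norm (z : ℂ) : ‖rcP z‖ ≤ (‖z‖ + 1) ^ 4 := by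
  rw [rcP, norm_mul, norm_pow, norm_pow]
  have : ‖z - Complex.I‖ ≤ ‖z‖ + 1 := by simpa using norm_sub_le z Complex.I
  calc _ ≤ (‖z‖ + 1) ^ 2 * (‖z‖ + 1) ^ 2 := by gcongr; linarith
    _ = _ := by ring

noncomputable def rcQ (a b c d z : ℂ) : ℂ := a * z ^ 3 + b * z ^ 2 + c * z + d

lemma rcQ_deriv (a b c d z : ℂ) : HasDerivAt (rcQ a b c d) (a * (3 * z ^ 2) + b * (2 * z) + c) z := by
  have h3 := ((((hasDerivAt_pow 3 z).const_mul a).add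
      ((hasDerivAt_pow 2 z).const_mul b)).add
      ((hasDerivAt_id z).const_mul c)).add_const d
  refine h3.congr_deriv ?_
  simp

lemma rc_cubic (a b c d z : ℂ) : ‖rcQ a b c d z‖
    ≤ (‖a‖ + ‖b‖ + ‖c‖ + ‖d‖) * (‖z‖ + 1) ^ 4 := by
  rw [rcQ]
  have h := norm_nonneg z
  have e1 : ‖z‖ ^ 3 ≤ (‖z‖ + 1) ^ 4 := by
    calc _ ≤ (‖z‖ + 1) ^ 3 := by gcongr; linarith
      _ ≤ _ := pow_le_pow_right₀ (by linarith) (by norm_num)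
  have e2 : ‖z‖ ^ 2 ≤ (‖z‖ + 1) ^ 4 := by
    calc _ ≤ (‖z‖ + 1) ^ 2 := by gcongr; linarith
      _ ≤ _ := pow_le_pow_right₀ (by linarith) (by norm_num)
  have e3 : ‖z‖ ≤ (‖z‖ + 1) ^ 4 := by
    calc _ ≤ (‖z‖ + 1) ^ 1 := by linarith
      _ ≤ _ := pow_le_pow_right₀ (by linarith) (by norm_num)
  have e4 : 1 ≤ (‖z‖ + 1) ^ 4 := one_le_pow₀ (by linarith)
  calc _ ≤ ‖a‖ * ‖z‖ ^ 3 + ‖b‖ * ‖z‖ ^ 2 + ‖c‖ * ‖z‖ + ‖d‖ * 1 := by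
        refine (norm_add_le _ _).trans ?_
        rw [mul_one]
        gcongr
        refine (norm_add_le _ _).trans ?_
        rw [norm_mul]
        gcongr
        refine (norm_add_le _ _).trans ?_
        simp
    _ ≤ ‖a‖ * (‖z‖ + 1) ^ 4 + ‖b‖ * (‖z‖ + 1) ^ 4 + ‖c‖ * (‖z‖ + 1) ^ 4 + ‖d‖ * (‖z‖ + 1) ^ 4 := by
        gcongr
    _ = _ := by ring

open Filter in
/-- decay of (at most quartic) times Gaussian, on the line of height 1 -/
lemma rc_dec {p : ℂ → ℂ} {K : ℝ} (hK : 0 ≤ K) (hp : ∀ z, ‖p z‖ ≤ K * (‖z‖ + 1) ^ 4) :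
    (∀ᶠ R : ℝ in atTop, ‖p (R + (1:ℝ) * Complex.I) * rcG (R + (1:ℝ) * Complex.I)‖
      ≤ K * (24 * Real.exp 2) * Real.exp (-R)) ∧
    (∀ᶠ R : ℝ in atTop, ‖p (R + (1:ℝ) * Complex.I) * (rcG (R + (1:ℝ) * Complex.I) *
      rcU (R + (1:ℝ) * Complex.I))‖ ≤ K * (24 * Real.exp 2) * Real.exp (-R)) := by
  have hpi := Real.pi_gt_three
  constructor <;>
  · filter_upwards [eventually_ge_atTop 0] with R hR
    have h1 := (hp (R + (1:ℝ) * Complex.I)).trans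
      (mul_le_mul_of_nonneg_left (rc_poly hR zero_le_one le_rfl) hK)
    simp only [norm_mul, rcG_norm, rcU_norm]
    try rw [← Real.exp_add]
    refine (mul_le_mul_of_nonneg_right h1 (Real.exp_nonneg _)).trans ?_
    rw [show K * (24 * Real.exp 2 * Real.exp R) = K * (24 * Real.exp 2) * Real.exp R by ring,
      mul_assoc _ (Real.exp R), ← Real.exp_add]
    gcongr
    nlinarith

lemma rcP_int : IntegrableOn (fun t : ℝ => rcP (t + (1:ℝ) * Complex.I) * rcG (t + (1:ℝ) * Complex.I)) (Ioi 0) :=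
  rc_int (Continuous.continuousOn (by fun_prop)) (rc_dec zero_le_one (p := rcP) (by simpa using rcP_norm)).1
lemma rcPU_int : IntegrableOn (fun t : ℝ => rcP (t + (1:ℝ) * Complex.I) * (rcG (t + (1:ℝ) * Complex.I) *
      rcU (t + (1:ℝ) * Complex.I))) (Ioi 0) :=
  rc_int (Continuous.continuousOn (by fun_prop)) (rc_dec zero_le_one (p := rcP) (by simpa using rcP_norm)).2

lemma rc_one (z : ℂ) : ‖(1:ℂ)‖ ≤ 1 * (‖z‖ + 1) ^ 4 := by
  rw [norm_one, one_mul]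
  exact one_le_pow₀ (by linarith [norm_nonneg z])

lemma rcG_int : IntegrableOn (fun t : ℝ => rcG (t + (1:ℝ) * Complex.I)) (Ioi 0) := by
  refine rc_int (C := 1 * (24 * Real.exp 2)) (Continuous.continuousOn (by fun_prop)) ?_
  simpa using (rc_dec zero_le_one (p := fun _ => 1) rc_one).1
lemma rcGU_int : IntegrableOn (fun t : ℝ => rcG (t + (1:ℝ) * Complex.I) * rcU (t + (1:ℝ) * Complex.I)) (Ioi 0) := by
  refine rc_int (C := 1 * (24 * Real.exp 2)) (Continuous.continuousOn (by fun_prop)) ?_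
  simpa using (rc_dec zero_le_one (p := fun _ => 1) rc_one).2

open Filter in
lemma rcQ_dec (a b c d : ℂ) :
    ∃ C : ℝ, (∀ᶠ R : ℝ in atTop, ‖rcQ a b c d (R + (1:ℝ) * Complex.I) * rcG (R + (1:ℝ) * Complex.I)‖
      ≤ C * Real.exp (-R)) ∧
    (∀ᶠ R : ℝ in atTop, ‖rcQ a b c d (R + (1:ℝ) * Complex.I) * (rcG (R + (1:ℝ) * Complex.I) *
      rcU (R + (1:ℝ) * Complex.I))‖ ≤ C * Real.exp (-R)) :=
  ⟨_, rc_dec (p := rcQ a b c d) (by positivity) (rc_cubic a b c d)⟩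

lemma rc_pi_ne : (π : ℂ) ≠ 0 := by simp [Real.pi_ne_zero]

lemma rc_L0 : (Complex.I * ∫ y in (0:ℝ)..1, rcP (y * Complex.I) * rcG (y * Complex.I)) +
    (∫ t in Ioi (0:ℝ), rcP (t + (1:ℝ) * Complex.I) * rcG (t + (1:ℝ) * Complex.I))
    = Complex.I / (4 * π ^ 2) + (-Complex.I / (4 * π) - 3 / (16 * π ^ 2)) * ((1 + Complex.I) / 4) := by
  have hpi := rc_pi_ne
  have hI := Complex.I_sq
  obtain ⟨C, hC⟩ := rcQ_dec (-Complex.I / (4 * π)) (-1 / (2 * π))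
      (Complex.I / (4 * π) + 3 / (16 * π ^ 2)) (-Complex.I / (4 * π ^ 2))
  have key := rc_ftc (a := 0) (b := 1) (F := fun z => rcP z * rcG z) (E := rcG)
    (A := fun z => rcQ (-Complex.I / (4 * π)) (-1 / (2 * π))
      (Complex.I / (4 * π) + 3 / (16 * π ^ 2)) (-Complex.I / (4 * π ^ 2)) z * rcG z)
    (c := -Complex.I / (4 * π) - 3 / (16 * π ^ 2))
    (by fun_prop) (by fun_prop) ?_ hC.1 rcP_int rcG_int
  · have m := rc_M0 one_pos
    unfold rcG at key ⊢
    rw [m] at key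
    rw [key]
    simp [rcQ]
    ring
  · intro z
    refine ((rcQ_deriv _ _ _ _ z).mul (rcG_deriv z)).congr_deriv ?_
    simp only [rcP, rcQ, Pi.mul_apply]
    field_simp
    ring_nf
    simp only [Complex.I_sq]
    ring

lemma rc_M1 : (Complex.I * ∫ y in (1/2:ℝ)..1, rcG (y * Complex.I) * rcU (y * Complex.I)) +
    (∫ t in Ioi (0:ℝ), rcG (t + (1:ℝ) * Complex.I) * rcU (t + (1:ℝ) * Complex.I))
    = Complex.I * ((1 + Complex.I) / 4) := by
  have m := rc_M0 (Y := 1/2) (by norm_num)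
  rw [← m, mul_add, ← integral_const_mul]
  congr 1
  · congr 1
    have := intervalIntegral.integral_comp_sub_right (a := 1/2) (b := 1) (fun y : ℝ => Complex.I * rcG (y * Complex.I)) (1/2)
    rw [show (1/2 - 1/2 : ℝ) = 0 by norm_num, show (1 - 1/2 : ℝ) = 1/2 by norm_num] at this
    rw [intervalIntegral.integral_const_mul (μ := volume) (a := 0)] at this
    refine Eq.trans ?_ this
    refine intervalIntegral.integral_congr fun y _ => ?_
    have h := rcG_half ((y - 1/2) * Complex.I)
    rw [show (y - 1/2) * Complex.I + Complex.I / 2 = y * Complex.I by ring] at h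
    simpa using h
  · congr 1
    ext t
    have h := rcG_half (t + ((1/2:ℝ):ℂ) * Complex.I)
    rw [show t + ((1/2:ℝ):ℂ) * Complex.I + Complex.I / 2 = t + (1:ℝ) * Complex.I by push_cast; ring] at h
    exact h

lemma rc_L1 : (Complex.I * ∫ y in (1/2:ℝ)..1, rcP (y * Complex.I) * (rcG (y * Complex.I) * rcU (y * Complex.I))) +
    (∫ t in Ioi (0:ℝ), rcP (t + (1:ℝ) * Complex.I) * (rcG (t + (1:ℝ) * Complex.I) * rcU (t + (1:ℝ) * Complex.I)))
    = (1 / 16 + Complex.I / (8 * π) - 3 / (16 * π ^ 2)) * (Complex.I * ((1 + Complex.I) / 4)) := by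
  have hpi := rc_pi_ne
  obtain ⟨C, hC⟩ := rcQ_dec (-Complex.I / (4 * π)) (-3 / (8 * π))
      (Complex.I / (16 * π) + 3 / (16 * π ^ 2)) (-1 / (32 * π) - 3 * Complex.I / (32 * π ^ 2))
  have key := rc_ftc (a := 1/2) (b := 1) (F := fun z => rcP z * (rcG z * rcU z)) (E := fun z => rcG z * rcU z)
    (A := fun z => rcQ (-Complex.I / (4 * π)) (-3 / (8 * π))
      (Complex.I / (16 * π) + 3 / (16 * π ^ 2)) (-1 / (32 * π) - 3 * Complex.I / (32 * π ^ 2)) z * (rcG z * rcU z))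
    (c := 1 / 16 + Complex.I / (8 * π) - 3 / (16 * π ^ 2))
    (by fun_prop) (by fun_prop) ?_ hC.2 rcPU_int rcGU_int
  · rw [rc_M1] at key
    rw [key]
    have : rcQ (-Complex.I / (4 * π)) (-3 / (8 * π))
      (Complex.I / (16 * π) + 3 / (16 * π ^ 2)) (-1 / (32 * π) - 3 * Complex.I / (32 * π ^ 2)) (((1/2:ℝ):ℂ) * Complex.I) = 0 := by
      rw [rcQ]
      push_cast
      field_simp
      ring_nf
      simp only [Complex.I_sq, Complex.I_pow_four]
      ring
    rw [this]
    simp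
  · intro z
    refine ((rcQ_deriv _ _ _ _ z).mul ((rcG_deriv z).mul (rcU_deriv z))).congr_deriv ?_
    simp only [rcP, rcQ, Pi.mul_apply]
    field_simp
    ring_nf
    simp only [Complex.I_sq]
    ring

noncomputable def rcf (z : ℂ) : ℂ := rcP z * rcG z / (rcU z - 1)

open Filter Topology in
lemma rc_sq : ContinuousAt (fun z : ℂ => z ^ 2 / (rcU z - 1)) 0 := by
  rw [continuousAt_iff_punctured_nhds]
  have h : HasDerivAt (fun z => rcU z - 1) (2 * π) 0 := by
    have := (rcU_deriv 0).sub_const 1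
    simpa [rcU] using this
  have h1 := hasDerivAt_iff_tendsto_slope.mp h
  have h2 := h1.inv₀ (by simp [Real.pi_ne_zero])
  have h3 : Tendsto (fun z : ℂ => z) (𝓝[≠] 0) (𝓝 0) := tendsto_id.mono_left nhdsWithin_le_nhds
  have h4 := h3.mul h2
  simp only [zero_mul] at h4
  simp only [ne_eq, OfNat.ofNat_ne_zero, not_false_eq_true, zero_pow, zero_div]
  refine h4.congr' ?_
  filter_upwards [self_mem_nhdsWithin] with z hz
  have h0 : rcU 0 = 1 := by simp [rcU]
  simp [slope, h0]
  ring

lemma rcf_cont : ContinuousOn rcf {z | 0 ≤ z.re ∧ 0 ≤ z.im ∧ z.im ≤ 1} := by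
  intro z hz
  apply ContinuousAt.continuousWithinAt
  by_cases h : rcU z = 1
  · rcases rcU_strip h hz.2.1 hz.2.2 with rfl | rfl
    · have e : rcf = fun z => z ^ 2 / (rcU z - 1) * ((z - Complex.I) ^ 2 * rcG z) := by
        ext z; simp only [rcf, rcP]; ring
      rw [e]
      exact rc_sq.mul (Continuous.continuousAt (by fun_prop))
    · have e : rcf = fun z => (z - Complex.I) ^ 2 / (rcU (z - Complex.I) - 1) * (z ^ 2 * rcG z) := by
        ext z
        have := rcU_I (z - Complex.I)
        rw [sub_add_cancel] at this
        simp only [rcf, rcP, ← this]; ring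
      rw [e]
      refine ContinuousAt.mul ?_ (Continuous.continuousAt (by fun_prop))
      have : ContinuousAt (fun z : ℂ => z ^ 2 / (rcU z - 1)) (Complex.I - Complex.I) := by
        rw [sub_self]; exact rc_sq
      exact ContinuousAt.comp (f := fun z : ℂ => z - Complex.I) this (by fun_prop)
  · unfold rcf
    exact ContinuousAt.div (Continuous.continuousAt (by fun_prop)) (Continuous.continuousAt (by fun_prop))
      (sub_ne_zero.mpr h)

lemma rcf_diff : DifferentiableOn ℂ rcf {z | 0 < z.re ∧ 0 < z.im ∧ z.im < 1} := by
  intro z hz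
  apply DifferentiableAt.differentiableWithinAt
  have h : rcU z ≠ 1 := by
    intro h
    rcases rcU_strip h hz.2.1.le hz.2.2.le with rfl | rfl <;> simp at hz
  unfold rcf
  exact DifferentiableAt.div (by fun_prop) (by fun_prop) (sub_ne_zero.mpr h)

open Filter in
lemma rcf_dec : ∀ᶠ R : ℝ in atTop, ∀ y : ℝ, 0 ≤ y → y ≤ 1 →
      ‖rcf (R + y * Complex.I)‖ ≤ (2 * (24 * Real.exp 2)) * Real.exp (-R) := by
  filter_upwards [eventually_ge_atTop 1] with R hR y h0 h1
  have hpi := Real.pi_gt_three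
  rw [rcf, norm_div, norm_mul, rcG_norm]
  have a := (rcP_norm (R + y * Complex.I)).trans (rc_poly (by linarith) h0 h1)
  have b : Real.exp (2 * π * R) / 2 ≤ ‖rcU (R + y * Complex.I) - 1‖ := by
    have := norm_sub_norm_le (rcU (R + y * Complex.I)) 1
    rw [rcU_norm, norm_one] at this
    have : 2 * π * R + 1 ≤ Real.exp (2 * π * R) := Real.add_one_le_exp _
    nlinarith
  have c : Real.exp (-4 * π * R * y) ≤ 1 := by
    rw [Real.exp_le_one_iff]
    have : 0 ≤ 4 * π * R * y := by positivity
    linarith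
  have d : Real.exp R ≤ Real.exp (-R) * Real.exp (2 * π * R) := by
    rw [← Real.exp_add]
    gcongr
    nlinarith
  rw [div_le_iff₀ (lt_of_lt_of_le (by positivity) b)]
  calc _ ≤ 24 * Real.exp 2 * Real.exp R * 1 := by gcongr
    _ ≤ 24 * Real.exp 2 * (Real.exp (-R) * Real.exp (2 * π * R)) * 1 := by gcongr
    _ = 2 * (24 * Real.exp 2) * Real.exp (-R) * (Real.exp (2 * π * R) / 2) := by ring
    _ ≤ _ := by gcongr

lemma rcP_I (t : ℂ) : rcP t - rcP (t + Complex.I) = -4 * Complex.I * t ^ 3 := by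
  simp only [rcP]; ring

lemma rcU_real_ne {t : ℝ} (ht : 0 < t) : rcU t - 1 ≠ 0 := by
  intro h
  obtain ⟨n, hn⟩ := rcU_eq_one (sub_eq_zero.mp h)
  have := congrArg Complex.re hn
  simp at this
  linarith

lemma rcf_sub {t : ℝ} (ht : 0 < t) : rcf t - rcf (t + (1:ℝ) * Complex.I) =
    -4 * Complex.I * (t ^ 3 * rcG t / (rcU t - 1)) +
      (rcP (t + (1:ℝ) * Complex.I) * rcG (t + (1:ℝ) * Complex.I) +
       rcP (t + (1:ℝ) * Complex.I) * (rcG (t + (1:ℝ) * Complex.I) * rcU (t + (1:ℝ) * Complex.I))) := by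
  have h := rcU_real_ne ht
  simp only [Complex.ofReal_one, one_mul]
  rw [rcf, rcf, rcU_I]
  have h1 := rcP_I t
  have h2 := rcG_I t
  field_simp
  rw [← h2]
  linear_combination (rcG (t + Complex.I) * rcU t ^ 2) * h1

/-- the vertical side -/
lemma rcP_refl (y : ℝ) : rcP (((1 - y : ℝ) : ℂ) * Complex.I) = rcP (y * Complex.I) := by
  simp only [rcP]; push_cast; ring

lemma rcU_refl (y : ℝ) : rcU (((1 - y : ℝ) : ℂ) * Complex.I) * rcU (y * Complex.I) = 1 := by
  rw [rcU, rcU, ← Complex.exp_add, ← Complex.exp_two_pi_mul_I]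
  congr 1; push_cast; ring

lemma rcG_refl (y : ℝ) : rcG (((1 - y : ℝ) : ℂ) * Complex.I) =
    rcG (y * Complex.I) * rcU (y * Complex.I) ^ 2 := by
  rw [rcG, rcU, rcG, ← Complex.exp_nat_mul, ← Complex.exp_add, Complex.exp_eq_exp_iff_exists_int]
  refine ⟨-1, ?_⟩
  push_cast
  linear_combination (2 * π * Complex.I * (1 - 2 * y)) * Complex.I_sq

lemma rcf_refl {y : ℝ} (h0 : 0 ≤ y) (h1 : y ≤ 1) :
    rcf (y * Complex.I) + rcf (((1 - y : ℝ) : ℂ) * Complex.I) =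
      -(rcP (y * Complex.I) * rcG (y * Complex.I) +
        rcP (y * Complex.I) * (rcG (y * Complex.I) * rcU (y * Complex.I)) +
        rcP (((1 - y : ℝ) : ℂ) * Complex.I) * rcG (((1 - y : ℝ) : ℂ) * Complex.I)) := by
  rw [rcf, rcf, rcP_refl, rcG_refl]
  have hu := rcU_refl y
  set v := rcU (((1 - y : ℝ) : ℂ) * Complex.I)
  by_cases h : rcU (y * Complex.I) = 1
  · have : rcP (y * Complex.I) = 0 := by
      rcases rcU_strip h (by simpa using h0) (by simpa using h1) with h | h <;> rw [h] <;> simp [rcP]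
    rw [this]; simp
  · have hU : rcU (y * Complex.I) ≠ 0 := Complex.exp_ne_zero _
    have hv : v = (rcU (y * Complex.I))⁻¹ := eq_inv_of_mul_eq_one_left hu
    have h' := sub_ne_zero.mpr h
    have h'' : 1 - rcU (y * Complex.I) ≠ 0 := sub_ne_zero.mpr (Ne.symm h)
    rw [hv]
    have : (rcU (y * Complex.I))⁻¹ - 1 = - (rcU (y * Complex.I) - 1) / rcU (y * Complex.I) := by
      field_simp; ring
    rw [this]
    field_simp
    ring

lemma rc_vert : (∫ y in (0:ℝ)..1, rcf (y * Complex.I)) =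
    -((∫ y in (0:ℝ)..1, rcP (y * Complex.I) * rcG (y * Complex.I)) +
      ∫ y in (1/2:ℝ)..1, rcP (y * Complex.I) * (rcG (y * Complex.I) * rcU (y * Complex.I))) := by
  have ic : ContinuousOn (fun y : ℝ => rcf (y * Complex.I)) (uIcc 0 1) := by
    rw [uIcc_of_le zero_le_one]
    refine rcf_cont.comp (by fun_prop) ?_
    intro y hy
    simpa using hy
  have ic' : ContinuousOn (fun y : ℝ => rcf (((1 - y : ℝ):ℂ) * Complex.I)) (uIcc 0 1) := by
    rw [uIcc_of_le zero_le_one]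
    refine rcf_cont.comp (by fun_prop) ?_
    intro y hy
    simpa using hy.symm
  have r1 := intervalIntegral.integral_comp_sub_left (a := 0) (b := 1) (fun y : ℝ => rcf (y * Complex.I)) 1
  have r2 := intervalIntegral.integral_comp_sub_left (a := 0) (b := 1)
    (fun y : ℝ => rcP (y * Complex.I) * rcG (y * Complex.I)) 1
  have r3 := intervalIntegral.integral_comp_sub_left (a := 1/2) (b := 1)
    (fun y : ℝ => rcP (y * Complex.I) * (rcG (y * Complex.I) * rcU (y * Complex.I))) 1
  rw [sub_self, sub_zero] at r1 r2
  rw [sub_self, show (1 - 1/2 : ℝ) = 1/2 by norm_num] at r3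
  have r4 : (∫ y in (1/2:ℝ)..1, rcP (((1 - y : ℝ):ℂ) * Complex.I) * (rcG (((1 - y : ℝ):ℂ) * Complex.I) * rcU (((1 - y : ℝ):ℂ) * Complex.I)))
      = ∫ y in (1/2:ℝ)..1, rcP (y * Complex.I) * (rcG (y * Complex.I) * rcU (y * Complex.I)) := by
    refine intervalIntegral.integral_congr fun y _ => ?_
    rw [rcP_refl, rcG_refl]
    linear_combination rcP (y * Complex.I) * rcG (y * Complex.I) * rcU (y * Complex.I) * rcU_refl y
  rw [r4] at r3
  have s := intervalIntegral.integral_congr (μ := volume) (a := 0) (b := 1)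
    (f := fun y : ℝ => rcf (y * Complex.I) + rcf (((1 - y : ℝ):ℂ) * Complex.I))
    (g := fun y : ℝ => -(rcP (y * Complex.I) * rcG (y * Complex.I) +
        rcP (y * Complex.I) * (rcG (y * Complex.I) * rcU (y * Complex.I)) +
        rcP (((1 - y : ℝ) : ℂ) * Complex.I) * rcG (((1 - y : ℝ) : ℂ) * Complex.I)))
    (fun y hy => by
      rw [uIcc_of_le zero_le_one] at hy
      exact rcf_refl hy.1 hy.2)
  have c1 : Continuous (fun y : ℝ => rcP (y * Complex.I) * rcG (y * Complex.I)) := by fun_prop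
  have c2 : Continuous (fun y : ℝ => rcP (y * Complex.I) * (rcG (y * Complex.I) * rcU (y * Complex.I))) := by fun_prop
  have c3 : Continuous (fun y : ℝ => rcP (((1 - y : ℝ) : ℂ) * Complex.I) * rcG (((1 - y : ℝ) : ℂ) * Complex.I)) := by fun_prop
  have c12 : Continuous (fun y : ℝ => rcP (y * Complex.I) * rcG (y * Complex.I) +
    rcP (y * Complex.I) * (rcG (y * Complex.I) * rcU (y * Complex.I))) := c1.add c2
  rw [intervalIntegral.integral_add ic.intervalIntegrable ic'.intervalIntegrable,
    intervalIntegral.integral_neg,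
    intervalIntegral.integral_add (c12.intervalIntegrable _ _) (c3.intervalIntegrable _ _),
    intervalIntegral.integral_add (c1.intervalIntegrable _ _) (c2.intervalIntegrable _ _),
    r1, r2, ← intervalIntegral.integral_add_adjacent_intervals (c2.intervalIntegrable 0 (1/2)) (c2.intervalIntegrable _ _),
    ← r3] at s
  linear_combination s / 2

lemma rc_J : IntegrableOn (fun t : ℝ => (t:ℂ) ^ 3 * rcG t / (rcU t - 1)) (Ioi 0) ∧
    4 * Complex.I * (∫ t in Ioi (0:ℝ), (t:ℂ) ^ 3 * rcG t / (rcU t - 1)) =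
    (Complex.I / (4 * π ^ 2) + (-Complex.I / (4 * π) - 3 / (16 * π ^ 2)) * ((1 + Complex.I) / 4)) +
    (1 / 16 + Complex.I / (8 * π) - 3 / (16 * π ^ 2)) * (Complex.I * ((1 + Complex.I) / 4)) := by
  obtain ⟨i1, i2, h⟩ := rc_shift one_pos rcf_cont rcf_diff rcf_dec
  have e : ∀ t ∈ Ioi (0:ℝ), (t:ℂ) ^ 3 * rcG t / (rcU t - 1) =
      (Complex.I / 4) * ((rcf t - rcf (t + (1:ℝ) * Complex.I)) - (rcP (t + (1:ℝ) * Complex.I) * rcG (t + (1:ℝ) * Complex.I) +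
       rcP (t + (1:ℝ) * Complex.I) * (rcG (t + (1:ℝ) * Complex.I) * rcU (t + (1:ℝ) * Complex.I)))) := by
    intro t ht
    rw [rcf_sub ht]
    linear_combination (-((t:ℂ) ^ 3 * rcG t / (rcU t - 1))) * -(Complex.I_sq)
  have j1 : IntegrableOn (fun t : ℝ => rcf t - rcf (t + (1:ℝ) * Complex.I)) (Ioi 0) := i1.sub i2
  have j2 : IntegrableOn (fun t : ℝ => rcP (t + (1:ℝ) * Complex.I) * rcG (t + (1:ℝ) * Complex.I) +
       rcP (t + (1:ℝ) * Complex.I) * (rcG (t + (1:ℝ) * Complex.I) * rcU (t + (1:ℝ) * Complex.I))) (Ioi 0) :=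
    rcP_int.add rcPU_int
  refine ⟨?_, ?_⟩
  · refine IntegrableOn.congr_fun ?_ (fun t ht => (e t ht).symm) measurableSet_Ioi
    exact ((i1.sub i2).sub (rcP_int.add rcPU_int)).const_mul _
  · rw [setIntegral_congr_fun measurableSet_Ioi e, integral_const_mul, integral_sub j1 j2,
      integral_sub i1 i2, integral_add rcP_int rcPU_int, h, rc_vert, ← rc_L0, ← rc_L1]
    linear_combination (-Complex.I * ((∫ y in (0:ℝ)..1, rcP (y * Complex.I) * rcG (y * Complex.I)) +
      ∫ y in (1/2:ℝ)..1, rcP (y * Complex.I) * (rcG (y * Complex.I) * rcU (y * Complex.I)))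
      - (∫ t in Ioi (0:ℝ), rcP (t + (1:ℝ) * Complex.I) * rcG (t + (1:ℝ) * Complex.I))
      - (∫ t in Ioi (0:ℝ), rcP (t + (1:ℝ) * Complex.I) * (rcG (t + (1:ℝ) * Complex.I) * rcU (t + (1:ℝ) * Complex.I)))) * Complex.I_sq

lemma rc_re (t : ℝ) : ((t:ℂ) ^ 3 * rcG t / (rcU t - 1)).re =
    t ^ 3 * Real.cos (2 * π * t ^ 2) / (Real.exp (2 * π * t) - 1) := by
  have h1 : rcU t - 1 = ((Real.exp (2 * π * t) - 1 : ℝ) : ℂ) := by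
    simp [rcU]
  have h2 : rcG t = Complex.exp (((2 * π * t ^ 2 : ℝ) : ℂ) * Complex.I) := by
    rw [rcG]; congr 1; push_cast; ring
  rw [h1, h2, Complex.div_ofReal_re, ← Complex.ofReal_pow, Complex.re_ofReal_mul, Complex.exp_ofReal_mul_I_re]

/-- Ramanujan's integral `R_C(1, 2)` converges and equals `(1/64)(1/2 - 3/π + 5/π²)`. -/
theorem ramanujan_RC_one_two :
    IntegrableOn
      (fun x : ℝ => x * Real.cos (2 * π * x) / (Real.exp (2 * π * Real.sqrt x) - 1)) (Ioi 0) ∧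
    (∫ x in Ioi (0:ℝ), x * Real.cos (2 * π * x) / (Real.exp (2 * π * Real.sqrt x) - 1)) =
      (1 / 64) * (1 / 2 - 3 / π + 5 / π ^ 2) := by
  obtain ⟨i, h⟩ := rc_J
  have ir : IntegrableOn (fun t : ℝ => ((t:ℂ) ^ 3 * rcG t / (rcU t - 1)).re) (Ioi 0) := i.re
  have e : ∀ t ∈ Ioi (0:ℝ), 2 * ((t:ℂ) ^ 3 * rcG t / (rcU t - 1)).re =
      (2 * t ^ ((2:ℝ) - 1)) • ((fun x : ℝ => x * Real.cos (2 * π * x) / (Real.exp (2 * π * Real.sqrt x) - 1)) (t ^ (2:ℝ))) := by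
    intro t ht
    have ht' : 0 ≤ t := le_of_lt ht
    rw [rc_re]
    norm_num [Real.sqrt_sq ht']
    ring
  constructor
  · rw [← integrableOn_Ioi_comp_rpow_iff _ (two_ne_zero : (2:ℝ) ≠ 0)]
    rw [abs_of_pos (two_pos : (0:ℝ) < 2)]
    exact IntegrableOn.congr_fun (ir.const_mul 2) e measurableSet_Ioi
  · rw [← integral_comp_rpow_Ioi_of_pos (two_pos : (0:ℝ) < 2),
      ← setIntegral_congr_fun measurableSet_Ioi e, integral_const_mul]
    have hre : (∫ t in Ioi (0:ℝ), ((t:ℂ) ^ 3 * rcG t / (rcU t - 1)).re) =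
      (∫ t in Ioi (0:ℝ), ((t:ℂ) ^ 3 * rcG t / (rcU t - 1))).re := integral_re i
    rw [hre]
    set J := ∫ t in Ioi (0:ℝ), ((t:ℂ) ^ 3 * rcG t / (rcU t - 1))
    have hpi := rc_pi_ne
    have hpi' := Real.pi_ne_zero
    have h2 : J = ((((1 / 64 - 3 / (32 * π) + 5 / (32 * π ^ 2)) / 4 : ℝ) : ℂ)) +
        (((1 / 64 - 1 / (32 * π) - 0 / (32 * π ^ 2)) / 4 : ℝ) : ℂ) * Complex.I := by
      have h4 : (4 * Complex.I) ≠ 0 := by simp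
      apply mul_left_cancel₀ h4
      rw [h]
      push_cast
      field_simp
      ring_nf
      simp only [Complex.I_sq, Complex.I_pow_three]
      ring_nf
    rw [h2, Complex.add_re, Complex.ofReal_re, Complex.re_ofReal_mul, Complex.I_re]
    field_simp
    ring
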